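/- For all natural numbers a, b, j, define carry(a,b,j) to hold iff there exists i < j such that bit i of a and bit i of b are both 1, and for every k with i < k < j, bit k of a or bit k of b is 1. Then bit j of a + b is 1 if and only if either carry(a,b,j) fails and the j-th bits of a and b differ, or carry(a,b,j) holds and the j-th bits of a and b agree. (Equivalently, Nat.testBit (a+b) j = Nat.testBit a j XOR Nat.testBit b j XOR carry(a,b,j).) -/

import Mathlib

/-- `carry a b j` holds iff the addition of the binary representations of `a` and `b`
produces a carry-bit to be added at position `j`: there is an `i < j` with bit `i`
of both `a` and `b` equal to 1 such that for all `k` with `i < k < j`, bit `k` of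
`a` or of `b` is 1. -/
def carry (a b j : ℕ) : Prop :=
  ∃ i : ℕ, i < j ∧ Nat.testBit a i = true ∧ Nat.testBit b i = true ∧
    ∀ k : ℕ, i < k → k < j → (Nat.testBit a k = true ∨ Nat.testBit b k = true)

theorem carry_succ_iff (a b j : ℕ) : carry a b (j + 1) ↔
    (a.testBit j = true ∧ b.testBit j = true) ∨
      ((a.testBit j = true ∨ b.testBit j = true) ∧ carry a b j) := by
  constructor
  · rintro ⟨i, hi, ha, hb, h⟩
    rcases Nat.lt_succ_iff_lt_or_eq.mp hi with hlt | rfl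
    · exact Or.inr ⟨h j hlt (by omega), i, hlt, ha, hb, fun k h1 h2 => h k h1 (by omega)⟩
    · exact Or.inl ⟨ha, hb⟩
  · rintro (⟨ha, hb⟩ | ⟨hj, i, hi, ha, hb, h⟩)
    · exact ⟨j, by omega, ha, hb, fun k h1 h2 => by omega⟩
    · refine ⟨i, by omega, ha, hb, fun k h1 h2 => ?_⟩
      rcases Nat.lt_succ_iff_lt_or_eq.mp h2 with hlt | rfl
      · exact h k h1 hlt
      · exact hj

theorem bitVec_carry_iff (w a b i : ℕ) (hi : i ≤ w) :
    BitVec.carry i (BitVec.ofNat w a) (BitVec.ofNat w b) false = true ↔ carry a b i := by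
  induction i with
  | zero => simp [carry]
  | succ n ih =>
    have hn : n < w := hi
    rw [BitVec.carry_succ, carry_succ_iff, ← ih hn.le]
    simp only [BitVec.getLsbD_ofNat, hn, decide_true, Bool.true_and, Bool.atLeastTwo]
    cases a.testBit n <;> cases b.testBit n <;> simp

/-- bit `j` of `a + b` is 1 iff either no carry occurs at position
`j` and bits `j` of `a` and `b` differ, or a carry occurs at position `j` and bits `j`
of `a` and `b` agree. -/
theorem testBit_add_iff_carry (a b j : ℕ) :
    Nat.testBit (a + b) j = true ↔
      (¬ carry a b j ∧ Nat.testBit a j ≠ Nat.testBit b j) ∨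
      (carry a b j ∧ Nat.testBit a j = Nat.testBit b j) := by
  have h := BitVec.getLsbD_add (w := j + 1) (i := j) (by omega)
    (BitVec.ofNat (j + 1) a) (BitVec.ofNat (j + 1) b)
  rw [← BitVec.ofNat_add] at h
  simp only [BitVec.getLsbD_ofNat, Nat.lt_succ_self, decide_true, Bool.true_and] at h
  rw [h, ← bitVec_carry_iff (j + 1) a b j (by omega)]
  cases a.testBit j <;> cases b.testBit j <;> simp
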